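/- Let a₀ ∈ (0,1) be the minimal root of 4a(2−a)(1−a)²(a²−2a+2)² = 1, let a ∈ (a₀, 1), and let δ₄ = (√6/3 − 1)(1−a) < 0. Then for all x ∈ (0,1) and all δ ∈ (a−1, δ₄], F(a−1, 1−a; 1; 1−x²) + C₇(δ)(1−x²) < F(a−1−δ, 1−a+δ; 1; 1−x³) < F(a−1, 1−a; 1; 1−x²) + C₈(δ)(1−x²), where C₇(δ) = −(3/2)·(δ² + 2(1−a)δ + (1−a)²/3) ≥ 0 and C₈(δ) = (1/π)·[sin(π(a−δ))/(1−a+δ) − sin(πa)/(1−a)]. -/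

import Mathlib

open Real Set Filter Topology

/-- The Gaussian hypergeometric function `F(a,b;c;x)`, defined as a power series
with Pochhammer (shifted factorial) coefficients. -/
noncomputable def hyp (a b c x : ℝ) : ℝ :=
  ∑' n : ℕ, ((∏ i ∈ Finset.range n, (a + i)) * (∏ i ∈ Finset.range n, (b + i)) /
    ((∏ i ∈ Finset.range n, (c + i)) * (Nat.factorial n))) * x ^ n

/-!
Write `p = 1 - a`, `q = 1 - a + δ` and regard `F(-q, q; 1; 1 - x³) - F(-p, p; 1; 1 - x²)` as a
function of `s = 1 - x²`. It is strictly convex on `[0, 1)`, hence lies strictly above its tangent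
at `s = 0`, whose slope is `C₇`, and strictly below the chord to its limit as `s → 1`, whose slope
is `C₈`. The limit is given by Abel's theorem: the partial sums of `∑ (-p)ₙ (p)ₙ / (n!)²` are the
partial products of Euler's product for `sin (π p) / (π p)`.

For the convexity, Euler's transformation removes the factor `1 / (1 - t)` from the second
derivatives. What remains is bounded coefficientwise by its value at `t = 0`, and the sign comes
down to `3 / 4 * q² * (1 - 3 * q²) ≤ p² * (1 - p²)`. The left side never exceeds `1 / 16`, so this
holds when `1 / 16 ≤ p² * (1 - p²)`, and for `p² ≤ 1 / 4` it follows from `q² ≤ 2 / 3 * p²`. The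
equation for `a₀` gives `1 / 16 ≤ u * (1 - u)` for `u = (1 - a₀)²`, so both cases together cover
`p² ≤ u`.
-/

local notation "hypCoeff" => ordinaryHypergeometricCoefficient

section Coefficients

variable {a b c : ℝ}

lemma ascPochhammer_eval_eq_prod (a : ℝ) (n : ℕ) :
    (ascPochhammer ℝ n).eval a = ∏ i ∈ Finset.range n, (a + i) := by
  induction n with
  | zero => simp
  | succ n ih => rw [ascPochhammer_succ_eval, ih, Finset.prod_range_succ]

lemma ascPochhammer_succ_eval_left (a : ℝ) (n : ℕ) :
    (ascPochhammer ℝ (n + 1)).eval a = a * (ascPochhammer ℝ n).eval (a + 1) := by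
  simp [ascPochhammer_succ_left]

lemma hypCoeff_zero (a b c : ℝ) : hypCoeff a b c 0 = 1 := by
  simp [ordinaryHypergeometricCoefficient]

lemma hypCoeff_succ (a b c : ℝ) (n : ℕ) :
    hypCoeff a b c (n + 1) = hypCoeff a b c n * ((a + n) * (b + n) / ((c + n) * (n + 1))) := by
  simp only [ordinaryHypergeometricCoefficient, ascPochhammer_succ_eval, Nat.factorial_succ,
    Nat.cast_mul, Nat.cast_succ, mul_inv, div_eq_mul_inv]
  ring

lemma succ_mul_hypCoeff_succ (a b c : ℝ) (n : ℕ) :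
    (n + 1) * hypCoeff a b c (n + 1) = a * b / c * hypCoeff (a + 1) (b + 1) (c + 1) n := by
  simp only [ordinaryHypergeometricCoefficient, ascPochhammer_succ_eval_left, Nat.factorial_succ,
    Nat.cast_mul, Nat.cast_succ, mul_inv, div_eq_mul_inv]
  field_simp

lemma hypCoeff_pos (ha : 0 < a) (hb : 0 < b) (hc : 0 < c) (n : ℕ) : 0 < hypCoeff a b c n := by
  have hA := ascPochhammer_pos n a ha
  have hB := ascPochhammer_pos n b hb
  have hC := ascPochhammer_pos n c hc
  positivity

lemma hypCoeff_add_one_right (hc : 0 < c) (n : ℕ) :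
    hypCoeff a b (c + 1) n = hypCoeff a b c n * (c / (c + n)) := by
  have hpoch : c * (ascPochhammer ℝ n).eval (c + 1) = (ascPochhammer ℝ n).eval c * (c + n) := by
    rw [← ascPochhammer_succ_eval_left, ascPochhammer_succ_eval]
  have hC := ascPochhammer_pos n c hc
  have hC' := ascPochhammer_pos n (c + 1) (by positivity)
  have hinv : ((ascPochhammer ℝ n).eval (c + 1))⁻¹ =
      ((ascPochhammer ℝ n).eval c)⁻¹ * (c / (c + n)) := by
    field_simp
    linarith
  rw [ordinaryHypergeometricCoefficient, ordinaryHypergeometricCoefficient, hinv]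
  ring

lemma hypCoeff_succ_sub (h : ∀ n : ℕ, a + b + 1 + n ≠ 0) (n : ℕ) :
    hypCoeff (a + 1) (b + 1) (a + b + 1) (n + 1) - hypCoeff (a + 1) (b + 1) (a + b + 1) n =
      hypCoeff a b (a + b + 1) (n + 1) := by
  have hshift : hypCoeff a b (a + b + 1) (n + 1) =
      hypCoeff (a + 1) (b + 1) (a + b + 1) n * (a * b / ((a + b + 1 + n) * (n + 1))) := by
    simp only [ordinaryHypergeometricCoefficient, ascPochhammer_succ_eval_left a,
      ascPochhammer_succ_eval_left b, ascPochhammer_succ_eval, Nat.factorial_succ,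
      Nat.cast_mul, Nat.cast_succ, mul_inv, div_eq_mul_inv]
    ring
  have hn := h n
  rw [hshift, hypCoeff_succ, ← mul_sub_one]
  congr 1
  field_simp
  ring

lemma sum_range_succ_hypCoeff (h : ∀ n : ℕ, a + b + 1 + n ≠ 0) (n : ℕ) :
    ∑ i ∈ Finset.range (n + 1), hypCoeff a b (a + b + 1) i =
      hypCoeff (a + 1) (b + 1) (a + b + 1) n := by
  induction n with
  | zero => simp
  | succ n ih => rw [Finset.sum_range_succ, ih, ← hypCoeff_succ_sub h, add_sub_cancel]

lemma hypCoeff_eq_prod_sin (p : ℝ) (n : ℕ) :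
    hypCoeff (-p + 1) (p + 1) 1 n = ∏ j ∈ Finset.range n, (1 - p ^ 2 / ((j : ℝ) + 1) ^ 2) := by
  induction n with
  | zero => rw [hypCoeff_zero, Finset.prod_range_zero]
  | succ n ih =>
    rw [hypCoeff_succ, ih, Finset.prod_range_succ]
    congr 1
    field_simp
    ring

end Coefficients

section PowerSeries

variable {a b c t : ℝ}

lemma hyp_eq_tsum (a b c : ℝ) : hyp a b c = fun t => ∑' n, hypCoeff a b c n * t ^ n := by
  funext t
  refine tsum_congr fun n => ?_
  simp only [ordinaryHypergeometricCoefficient, ascPochhammer_eval_eq_prod]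
  ring

lemma hyp_eq_ordinaryHypergeometric (a b c : ℝ) : hyp a b c = ₂F₁ a b c := by
  rw [hyp_eq_tsum, ordinaryHypergeometric_eq_tsum]
  rfl

lemma one_le_radius_ordinaryHypergeometricSeries (a b c : ℝ) :
    1 ≤ (ordinaryHypergeometricSeries ℝ a b c).radius := by
  by_cases habc : ∀ k : ℕ, (k : ℝ) ≠ -a ∧ (k : ℝ) ≠ -b ∧ (k : ℝ) ≠ -c
  · exact (ordinaryHypergeometricSeries_radius_eq_one ℝ a b c habc).ge
  · simp only [not_forall, not_and_or, not_not, eq_comm (a := (Nat.cast _ : ℝ)),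
      neg_eq_iff_eq_neg] at habc
    obtain ⟨k, rfl | rfl | rfl⟩ := habc
    · exact le_top.trans_eq (ordinaryHypergeometric_radius_top_of_neg_nat₁ ℝ b c).symm
    · exact le_top.trans_eq (ordinaryHypergeometric_radius_top_of_neg_nat₂ ℝ a c).symm
    · exact le_top.trans_eq (ordinaryHypergeometric_radius_top_of_neg_nat₃ ℝ a b).symm

lemma hasFPowerSeriesOnBall_hyp (a b c : ℝ) :
    HasFPowerSeriesOnBall (hyp a b c) (ordinaryHypergeometricSeries ℝ a b c) 0 1 := by
  have hradius := one_le_radius_ordinaryHypergeometricSeries a b c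
  rw [hyp_eq_ordinaryHypergeometric]
  exact ((ordinaryHypergeometricSeries ℝ a b c).hasFPowerSeriesOnBall
    (one_pos.trans_le hradius)).mono one_pos hradius

lemma mem_eball_zero_one (ht : |t| < 1) : t ∈ Metric.eball (0 : ℝ) 1 := by
  simpa [← ENNReal.ofReal_one, Metric.eball_ofReal] using ht

lemma hasSum_hyp (ht : |t| < 1) : HasSum (fun n => hypCoeff a b c n * t ^ n) (hyp a b c t) := by
  have hsum := (hasFPowerSeriesOnBall_hyp a b c).hasSum (mem_eball_zero_one ht)
  rw [zero_add] at hsum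
  exact hsum.congr_fun fun n => by
    simp [ordinaryHypergeometricSeries, mul_comm]

lemma hyp_apply_zero (a b c : ℝ) : hyp a b c 0 = 1 := by
  rw [hyp_eq_ordinaryHypergeometric, ordinaryHypergeometric_zero]

lemma hasDerivAt_hyp (ht : |t| < 1) :
    HasDerivAt (hyp a b c) (a * b / c * hyp (a + 1) (b + 1) (c + 1) t) t := by
  have hball := mem_eball_zero_one ht
  have hseries := hasFPowerSeriesOnBall_hyp a b c
  have hdiff : DifferentiableAt ℝ (hyp a b c) t :=
    hseries.differentiableOn.differentiableAt (Metric.isOpen_eball.mem_nhds hball)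
  have hderiv := (hseries.fderiv.hasSum hball).mapL (ContinuousLinearMap.apply ℝ ℝ (1 : ℝ))
  have hterm (n : ℕ) : a * b / c * (hypCoeff (a + 1) (b + 1) (c + 1) n * t ^ n) =
      ContinuousLinearMap.apply ℝ ℝ (1 : ℝ)
        ((ordinaryHypergeometricSeries ℝ a b c).derivSeries n fun _ => t) := by
    rw [FormalMultilinearSeries.apply_eq_pow_smul_coeff, ContinuousLinearMap.apply_apply,
      smul_apply, FormalMultilinearSeries.derivSeries_coeff_one,
      ordinaryHypergeometricSeries, FormalMultilinearSeries.coeff_ofScalars, ← mul_assoc,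
      ← succ_mul_hypCoeff_succ, nsmul_eq_mul, smul_eq_mul, Nat.cast_succ, mul_comm]
  have heq := (hderiv.congr_fun hterm).unique ((hasSum_hyp ht).mul_left _)
  rw [zero_add, ContinuousLinearMap.apply_apply, fderiv_apply_one_eq_deriv] at heq
  exact heq ▸ hdiff.hasDerivAt

/-- Euler's transformation `(1 - t)^(a + b - c) F(a, b; c; t) = F(c - a, c - b; c; t)` in the case
`a + b - c = 1`. -/
lemma one_sub_mul_hyp (h : ∀ n : ℕ, a + b + 1 + n ≠ 0) (ht : |t| < 1) :
    (1 - t) * hyp (a + 1) (b + 1) (a + b + 1) t = hyp a b (a + b + 1) t := by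
  have hsum := hasSum_hyp (a := a + 1) (b := b + 1) (c := a + b + 1) ht
  have hsucc := (hasSum_nat_add_iff' 1).2 hsum
  have hdiff := (hsucc.sub (hsum.mul_right t)).congr_fun fun n =>
    show hypCoeff a b (a + b + 1) (n + 1) * t ^ (n + 1) = _ by
      rw [← hypCoeff_succ_sub h]
      ring
  have heq := ((hasSum_nat_add_iff' 1).2 (hasSum_hyp (a := a) (b := b) (c := a + b + 1) ht)).unique
    hdiff
  simp only [Finset.sum_range_one, hypCoeff_zero, pow_zero, mul_one] at heq
  linarith

lemma one_sub_le_hyp_sub_mul_hyp (ha : 0 < a) (hb : 0 < b) (hc : 0 < c) {κ : ℝ}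
    (hκ : κ * c ≤ c + 1) (ht : t ∈ Ico (0 : ℝ) 1) :
    1 - κ ≤ hyp a b c t - κ * hyp a b (c + 1) t := by
  have ht' : |t| < 1 := by rw [abs_of_nonneg ht.1]; exact ht.2
  have hsum := (hasSum_hyp (a := a) (b := b) (c := c) ht').sub
    ((hasSum_hyp (a := a) (b := b) (c := c + 1) ht').mul_left κ)
  have hterm : ∀ n ≠ 0,
      0 ≤ hypCoeff a b c n * t ^ n - κ * (hypCoeff a b (c + 1) n * t ^ n) := by
    intro n hn
    have hn1 : (1 : ℝ) ≤ n := by exact_mod_cast Nat.one_le_iff_ne_zero.2 hn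
    have hfactor : κ * (c / (c + n)) ≤ 1 := by
      rw [← mul_div_assoc, div_le_one (by positivity)]
      linarith
    have hcoeff : 0 ≤ hypCoeff a b c n * t ^ n :=
      mul_nonneg (hypCoeff_pos ha hb hc n).le (pow_nonneg ht.1 n)
    calc 0 ≤ hypCoeff a b c n * t ^ n * (1 - κ * (c / (c + n))) :=
          mul_nonneg hcoeff (sub_nonneg.2 hfactor)
      _ = hypCoeff a b c n * t ^ n - κ * (hypCoeff a b (c + 1) n * t ^ n) := by
          rw [hypCoeff_add_one_right hc]; ring
  simpa only [hypCoeff_zero, pow_zero, mul_one] using le_hasSum hsum 0 hterm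

lemma one_le_hyp (ha : 0 < a) (hb : 0 < b) (hc : 0 < c) (ht : t ∈ Ico (0 : ℝ) 1) :
    1 ≤ hyp a b c t := by
  simpa using one_sub_le_hyp_sub_mul_hyp ha hb hc (κ := 0) (by linarith) ht

lemma tendsto_hyp_neg_self_nhdsLT_one {p : ℝ} (hp : p ≠ 0) :
    Tendsto (hyp (-p) p 1) (𝓝[<] 1) (𝓝 (sin (π * p) / (π * p))) := by
  have hπp : π * p ≠ 0 := mul_ne_zero pi_ne_zero hp
  have hpartial (n : ℕ) : ∑ i ∈ Finset.range (n + 1), hypCoeff (-p) p 1 i =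
      ∏ j ∈ Finset.range n, (1 - p ^ 2 / ((j : ℝ) + 1) ^ 2) := by
    have hsum := sum_range_succ_hypCoeff (a := -p) (b := p)
      (fun n => by rw [neg_add_cancel]; positivity) n
    rwa [neg_add_cancel, zero_add, hypCoeff_eq_prod_sin] at hsum
  rw [hyp_eq_tsum]
  refine Real.tendsto_tsum_powerSeries_nhdsWithin_lt ((tendsto_add_atTop_iff_nat 1).1 ?_)
  refine ((Real.tendsto_euler_sin_prod p).div_const (π * p)).congr fun n => ?_
  rw [hpartial, mul_div_cancel_left₀ _ hπp]

lemma hasDerivAt_hyp_add (h : ∀ n : ℕ, a + b + 1 + n ≠ 0) (ht : |t| < 1) :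
    HasDerivAt (hyp a b (a + b)) (a * b / (a + b) * (hyp a b (a + b + 1) t / (1 - t))) t := by
  have ht1 : 1 - t ≠ 0 := (sub_pos.2 (abs_lt.1 ht).2).ne'
  rw [← one_sub_mul_hyp h ht, mul_div_cancel_left₀ _ ht1]
  exact hasDerivAt_hyp ht

end PowerSeries

section Convexity

lemma slope_lt_of_tendsto_nhdsLT {f : ℝ → ℝ} {a b x l : ℝ} (hf : StrictConvexOn ℝ (Ico a b) f)
    (hlim : Tendsto f (𝓝[<] b) (𝓝 l)) (hx : x ∈ Ioo a b) :
    slope f a x < (l - f a) / (b - a) := by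
  have hab : a < b := hx.1.trans hx.2
  have hmono : ∀ ⦃y z⦄, a < y → y < z → z < b → slope f a y < slope f a z := by
    intro y z hy hyz hz
    have hay : a < z := hy.trans hyz
    simpa only [slope_def_field] using hf.secant_strict_mono ⟨le_rfl, hab⟩
      ⟨hy.le, hyz.trans hz⟩ ⟨hay.le, hz⟩ hy.ne' hay.ne' hyz
  have hslope : Tendsto (slope f a) (𝓝[<] b) (𝓝 ((l - f a) / (b - a))) := by
    have hid : Tendsto (fun y : ℝ => y) (𝓝[<] b) (𝓝 b) := nhdsWithin_le_nhds
    exact ((hlim.sub_const (f a)).div (hid.sub_const a) (sub_pos.2 hab).ne').congr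
      fun y => (slope_def_field f a y).symm
  obtain ⟨y, hxy, hyb⟩ := exists_between hx.2
  have hle : slope f a y ≤ (l - f a) / (b - a) :=
    ge_of_tendsto hslope <| (eventually_mem_nhdsWithin.and
      (eventually_nhdsWithin_of_eventually_nhds (eventually_gt_nhds hyb))).mono
      fun z hz => (hmono (hx.1.trans hxy) hz.2 hz.1).le
  exact (hmono hx.1 hxy hyb).trans_le hle

end Convexity

section Comparison

variable {p q : ℝ}

lemma one_sub_pow_mem_Ico {x : ℝ} (hx : x ∈ Ioc (0 : ℝ) 1) (n : ℕ) : 1 - x ^ n ∈ Ico (0 : ℝ) 1 :=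
  ⟨sub_nonneg.2 (pow_le_one₀ hx.1.le hx.2), sub_lt_self 1 (pow_pos hx.1 n)⟩

lemma abs_one_sub_pow_lt_one {x : ℝ} (hx : x ∈ Ioc (0 : ℝ) 1) (n : ℕ) : |1 - x ^ n| < 1 := by
  obtain ⟨hnonneg, hlt⟩ := one_sub_pow_mem_Ico hx n
  rwa [abs_of_nonneg hnonneg]

lemma sqrt_one_sub_mem_Ioc {s : ℝ} (hs : s ∈ Ico (0 : ℝ) 1) : √(1 - s) ∈ Ioc (0 : ℝ) 1 :=
  ⟨sqrt_pos.2 (sub_pos.2 hs.2), sqrt_le_one.2 (sub_le_self 1 hs.1)⟩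

lemma hasDerivAt_hyp_neg_self {t : ℝ} (ht : |t| < 1) :
    HasDerivAt (hyp (-p) p 1) (-p ^ 2 * hyp (1 - p) (1 + p) 2 t) t := by
  refine (hasDerivAt_hyp ht).congr_deriv ?_
  rw [neg_add_eq_sub, add_comm p, one_add_one_eq_two]
  ring

lemma hasDerivAt_hyp_one_sub_pow (p : ℝ) (n : ℕ) {x : ℝ} (hx : x ∈ Ioc (0 : ℝ) 1) :
    HasDerivAt (fun x => hyp (1 - p) (1 + p) 2 (1 - x ^ n))
      (-(n * (1 - p ^ 2) / (2 * x)) * hyp (1 - p) (1 + p) 3 (1 - x ^ n)) x := by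
  have hx0 := hx.1.ne'
  have habc : 1 - p + (1 + p) = 2 := by ring
  have hF := hasDerivAt_hyp_add (a := 1 - p) (b := 1 + p)
    (fun k => by rw [habc]; positivity) (abs_one_sub_pow_lt_one hx n)
  rw [habc, two_add_one_eq_three, sub_sub_cancel] at hF
  refine (hF.comp x ((hasDerivAt_pow n x).const_sub 1)).congr_deriv ?_
  rcases n with _ | n
  · simp
  · rw [Nat.add_sub_cancel]
    field_simp
    ring

/-- The difference `F(-q, q; 1; 1 - x³) - F(-p, p; 1; 1 - x²)` as a function of `s = 1 - x²`. -/
noncomputable def hypGap (p q s : ℝ) : ℝ :=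
  hyp (-q) q 1 (1 - √(1 - s) ^ 3) - hyp (-p) p 1 s

/-- The derivative of `hypGap p q` with respect to `s = 1 - x²`, as a function of `x`. -/
noncomputable def hypGapSlope (p q x : ℝ) : ℝ :=
  p ^ 2 * hyp (1 - p) (1 + p) 2 (1 - x ^ 2) -
    3 / 2 * q ^ 2 * (x * hyp (1 - q) (1 + q) 2 (1 - x ^ 3))

lemma hypGap_zero (p q : ℝ) : hypGap p q 0 = 0 := by
  simp [hypGap, hyp_apply_zero]

lemma hypGapSlope_one (p q : ℝ) : hypGapSlope p q 1 = p ^ 2 - 3 / 2 * q ^ 2 := by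
  simp [hypGapSlope, hyp_apply_zero]

lemma hypGap_one_sub_sq (p q : ℝ) {x : ℝ} (hx : 0 ≤ x) :
    hypGap p q (1 - x ^ 2) = hyp (-q) q 1 (1 - x ^ 3) - hyp (-p) p 1 (1 - x ^ 2) := by
  rw [hypGap, sub_sub_cancel, sqrt_sq hx]

lemma slope_hypGap_zero (p q s : ℝ) : slope (hypGap p q) 0 s = hypGap p q s / s := by
  rw [slope_def_field, hypGap_zero, sub_zero, sub_zero]

lemma hasDerivAt_hypGap {s : ℝ} (hs : s ∈ Ico (0 : ℝ) 1) :
    HasDerivAt (hypGap p q) (hypGapSlope p q √(1 - s)) s := by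
  have hx := sqrt_one_sub_mem_Ioc hs
  have hsq : √(1 - s) ^ 2 = 1 - s := sq_sqrt (sub_nonneg.2 hs.2.le)
  have hs' : |s| < 1 := by rw [abs_of_nonneg hs.1]; exact hs.2
  have hsqrt := ((hasDerivAt_id s).const_sub 1).sqrt (sub_pos.2 hs.2).ne'
  have hF := (hasDerivAt_hyp_neg_self (p := q) (abs_one_sub_pow_lt_one hx 3)).comp s
    ((hsqrt.pow 3).const_sub 1)
  refine (hF.sub (hasDerivAt_hyp_neg_self (p := p) hs')).congr_deriv ?_
  have hx0 := hx.1.ne'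
  rw [hypGapSlope, hsq, sub_sub_cancel]
  simp only [id]
  field_simp
  ring

lemma tendsto_hypGap_nhdsLT_one (hp : p ≠ 0) (hq : q ≠ 0) :
    Tendsto (hypGap p q) (𝓝[<] 1) (𝓝 (sin (π * q) / (π * q) - sin (π * p) / (π * p))) := by
  have hlim : Tendsto (fun s : ℝ => 1 - √(1 - s) ^ 3) (𝓝[<] 1) (𝓝[<] 1) := by
    refine tendsto_nhdsWithin_iff.2 ⟨?_, eventually_mem_nhdsWithin.mono fun s hs => ?_⟩
    · have hcont : Continuous fun s : ℝ => 1 - √(1 - s) ^ 3 := by fun_prop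
      exact tendsto_nhdsWithin_of_tendsto_nhds (hcont.tendsto' 1 1 (by simp))
    · exact sub_lt_self 1 (pow_pos (sqrt_pos.2 (sub_pos.2 hs)) 3)
  exact ((tendsto_hyp_neg_self_nhdsLT_one hq).comp hlim).sub (tendsto_hyp_neg_self_nhdsLT_one hp)

lemma hasDerivAt_hypGapSlope (p q : ℝ) {x : ℝ} (hx : x ∈ Ioc (0 : ℝ) 1) :
    HasDerivAt (hypGapSlope p q)
      (-(p ^ 2 * (1 - p ^ 2) * (hyp (1 - p) (1 + p) 3 (1 - x ^ 2) / x)) -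
        3 / 2 * q ^ 2 * (hyp (1 - q) (1 + q) 2 (1 - x ^ 3) -
          3 / 2 * (1 - q ^ 2) * hyp (1 - q) (1 + q) 3 (1 - x ^ 3))) x := by
  refine (((hasDerivAt_hyp_one_sub_pow p 2 hx).const_mul (p ^ 2)).sub
    (((hasDerivAt_id x).mul (hasDerivAt_hyp_one_sub_pow q 3 hx)).const_mul
      (3 / 2 * q ^ 2))).congr_deriv ?_
  have hx0 := hx.1.ne'
  simp only [id]
  push_cast
  field_simp
  ring

lemma strictAntiOn_hypGapSlope (hp0 : p ≠ 0) (hp : |p| < 1) (hq : |q| < 1)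
    (hpq : 3 / 4 * (q ^ 2 * (1 - 3 * q ^ 2)) ≤ p ^ 2 * (1 - p ^ 2)) :
    StrictAntiOn (hypGapSlope p q) (Ioc 0 1) := by
  refine strictAntiOn_of_deriv_neg (convex_Ioc 0 1)
    (fun x hx => (hasDerivAt_hypGapSlope p q hx).continuousAt.continuousWithinAt) fun x hx => ?_
  rw [interior_Ioc] at hx
  have hx' : x ∈ Ioc (0 : ℝ) 1 := Ioo_subset_Ioc_self hx
  rw [(hasDerivAt_hypGapSlope p q hx').deriv]
  obtain ⟨hp1, hp2⟩ := abs_lt.1 hp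
  obtain ⟨hq1, hq2⟩ := abs_lt.1 hq
  have hP : 1 < hyp (1 - p) (1 + p) 3 (1 - x ^ 2) / x :=
    (one_lt_div hx.1).2 <| hx.2.trans_le <|
      one_le_hyp (by linarith) (by linarith) three_pos (one_sub_pow_mem_Ico hx' 2)
  have hQ := one_sub_le_hyp_sub_mul_hyp (a := 1 - q) (b := 1 + q) (c := 2)
    (κ := 3 / 2 * (1 - q ^ 2)) (by linarith) (by linarith) two_pos
    (by linarith [sq_nonneg q]) (one_sub_pow_mem_Ico hx' 3)
  rw [two_add_one_eq_three] at hQ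
  have hpcoeff : 0 < p ^ 2 * (1 - p ^ 2) :=
    mul_pos (by positivity) (sub_pos.2 ((sq_lt_one_iff_abs_lt_one p).2 hp))
  have hP' := mul_lt_mul_of_pos_left hP hpcoeff
  have hQ' := mul_le_mul_of_nonneg_left hQ (by positivity : 0 ≤ 3 / 2 * q ^ 2)
  linarith

lemma strictConvexOn_hypGap (hp0 : p ≠ 0) (hp : |p| < 1) (hq : |q| < 1)
    (hpq : 3 / 4 * (q ^ 2 * (1 - 3 * q ^ 2)) ≤ p ^ 2 * (1 - p ^ 2)) :
    StrictConvexOn ℝ (Ico 0 1) (hypGap p q) := by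
  refine StrictMonoOn.strictConvexOn_of_deriv (convex_Ico 0 1)
    (fun s hs => (hasDerivAt_hypGap hs).continuousAt.continuousWithinAt) ?_
  have hsqrt : StrictAntiOn (fun s : ℝ => √(1 - s)) (Ico 0 1) := fun s _ t ht hst =>
    sqrt_lt_sqrt (sub_nonneg.2 ht.2.le) (sub_lt_sub_left hst 1)
  have hslope := (strictAntiOn_hypGapSlope hp0 hp hq hpq).comp hsqrt fun s => sqrt_one_sub_mem_Ioc
  rw [interior_Ico]
  exact (hslope.mono Ioo_subset_Ico_self).congr fun s hs =>
    (hasDerivAt_hypGap (Ioo_subset_Ico_self hs)).deriv.symm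

lemma one_sub_sq_mem_Ioo {x : ℝ} (hx : x ∈ Ioo (0 : ℝ) 1) : 1 - x ^ 2 ∈ Ioo (0 : ℝ) 1 :=
  ⟨sub_pos.2 (pow_lt_one₀ hx.1.le hx.2 two_ne_zero), sub_lt_self 1 (pow_pos hx.1 2)⟩

theorem hyp_one_sub_sq_add_lt (hp0 : p ≠ 0) (hp : |p| < 1) (hq : |q| < 1)
    (hpq : 3 / 4 * (q ^ 2 * (1 - 3 * q ^ 2)) ≤ p ^ 2 * (1 - p ^ 2)) {x : ℝ}
    (hx : x ∈ Ioo (0 : ℝ) 1) :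
    hyp (-p) p 1 (1 - x ^ 2) + (p ^ 2 - 3 / 2 * q ^ 2) * (1 - x ^ 2) <
      hyp (-q) q 1 (1 - x ^ 3) := by
  have hs := one_sub_sq_mem_Ioo hx
  have htangent := (hasDerivAt_hypGap (p := p) (q := q) ⟨le_rfl, one_pos⟩)
  rw [sub_zero, sqrt_one, hypGapSlope_one] at htangent
  have hlt := (strictConvexOn_hypGap hp0 hp hq hpq).lt_slope_of_hasDerivAt ⟨le_rfl, one_pos⟩
    (Ioo_subset_Ico_self hs) hs.1 htangent
  rw [slope_hypGap_zero, lt_div_iff₀ hs.1, hypGap_one_sub_sq p q hx.1.le] at hlt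
  linarith

theorem hyp_one_sub_cube_lt (hp0 : p ≠ 0) (hp : |p| < 1) (hq0 : q ≠ 0) (hq : |q| < 1)
    (hpq : 3 / 4 * (q ^ 2 * (1 - 3 * q ^ 2)) ≤ p ^ 2 * (1 - p ^ 2)) {x : ℝ}
    (hx : x ∈ Ioo (0 : ℝ) 1) :
    hyp (-q) q 1 (1 - x ^ 3) < hyp (-p) p 1 (1 - x ^ 2) +
      (sin (π * q) / (π * q) - sin (π * p) / (π * p)) * (1 - x ^ 2) := by
  have hs := one_sub_sq_mem_Ioo hx
  have hlt := slope_lt_of_tendsto_nhdsLT (strictConvexOn_hypGap hp0 hp hq hpq)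
    (tendsto_hypGap_nhdsLT_one hp0 hq0) hs
  rw [slope_hypGap_zero, hypGap_zero, sub_zero, sub_zero, div_one, div_lt_iff₀ hs.1,
    hypGap_one_sub_sq p q hx.1.le] at hlt
  linarith

end Comparison

section Parameters

-- `(2 + √3) / 4` is the larger root of `u * (1 - u) = 1 / 16`.
lemma le_of_inv_sixteen_le_mul_one_sub {u : ℝ} (h : 1 / 16 ≤ u * (1 - u)) :
    u ≤ (2 + √3) / 4 := by
  have hsqrt : 4 * u - 2 ≤ √3 := le_sqrt_of_sq_le (by linarith)
  linarith

lemma le_of_four_mul_eq_one {u : ℝ} (hu0 : 0 < u) (hu1 : u < 1)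
    (h : 4 * (u * (1 - u) * (1 + u) ^ 2) = 1) : u ≤ (2 + √3) / 4 := by
  have hpos : 0 < u * (1 - u) := mul_pos hu0 (sub_pos.2 hu1)
  have hsq : (1 + u) ^ 2 ≤ 2 ^ 2 := pow_le_pow_left₀ (by linarith) (by linarith) 2
  exact le_of_inv_sixteen_le_mul_one_sub (by linarith [mul_le_mul_of_nonneg_left hsq hpos.le])

lemma sq_one_sub_le_of_root {a : ℝ} (ha : a ∈ Ioo (0 : ℝ) 1)
    (hroot : 4 * a * (2 - a) * (1 - a) ^ 2 * (a ^ 2 - 2 * a + 2) ^ 2 = 1) :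
    (1 - a) ^ 2 ≤ (2 + √3) / 4 :=
  le_of_four_mul_eq_one (pow_pos (sub_pos.2 ha.2) 2)
    (pow_lt_one₀ (sub_nonneg.2 ha.2.le) (sub_lt_self 1 ha.1) two_ne_zero)
    (by linear_combination hroot)

lemma mul_one_sub_three_mul_le {u v : ℝ} (hu0 : 0 ≤ u) (hu : u ≤ (2 + √3) / 4)
    (hvu : v ≤ 2 / 3 * u) : 3 / 4 * (v * (1 - 3 * v)) ≤ u * (1 - u) := by
  rcases le_or_gt u (1 / 4) with hsmall | hlarge
  · have hmono : 0 ≤ (2 / 3 * u - v) * (1 - 3 * v - 2 * u) :=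
      mul_nonneg (by linarith) (by linarith)
    linarith
  · have hmax : v * (1 - 3 * v) ≤ 1 / 12 := by linarith [sq_nonneg (6 * v - 1)]
    have hroots : 0 ≤ ((2 + √3) / 4 - u) * (u - (2 - √3) / 4) :=
      mul_nonneg (by linarith) (by linarith [one_le_sqrt.2 (by norm_num : (1 : ℝ) ≤ 3)])
    linarith [sq_sqrt (by norm_num : (0 : ℝ) ≤ 3)]

lemma sin_div_sub_sin_div (a δ : ℝ) :
    1 / π * (sin (π * (a - δ)) / (1 - a + δ) - sin (π * a) / (1 - a)) =
      sin (π * (1 - a + δ)) / (π * (1 - a + δ)) - sin (π * (1 - a)) / (π * (1 - a)) := by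
  rw [show π * (a - δ) = π - π * (1 - a + δ) by ring, show π * a = π - π * (1 - a) by ring,
    sin_pi_sub, sin_pi_sub]
  field_simp

end Parameters

theorem stmt18_general {a δ₄ : ℝ} (ha : a < 1) (ha' : (1 - a) ^ 2 ≤ (2 + √3) / 4)
    (hδ₄ : δ₄ = (√6 / 3 - 1) * (1 - a)) :
    δ₄ < 0 ∧
      ∀ x ∈ Ioo (0 : ℝ) 1, ∀ δ ∈ Ioc (a - 1) δ₄,
        0 ≤ -(3 / 2) * (δ ^ 2 + 2 * (1 - a) * δ + (1 - a) ^ 2 / 3) ∧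
        hyp (a - 1) (1 - a) 1 (1 - x ^ 2) +
            (-(3 / 2) * (δ ^ 2 + 2 * (1 - a) * δ + (1 - a) ^ 2 / 3)) * (1 - x ^ 2)
          < hyp (a - 1 - δ) (1 - a + δ) 1 (1 - x ^ 3) ∧
        hyp (a - 1 - δ) (1 - a + δ) 1 (1 - x ^ 3)
          < hyp (a - 1) (1 - a) 1 (1 - x ^ 2) +
              ((1 / π) * (sin (π * (a - δ)) / (1 - a + δ) - sin (π * a) / (1 - a))) *
                (1 - x ^ 2) := by
  have hp0 : 0 < 1 - a := sub_pos.2 ha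
  have hsqrt3 : √3 < 2 := (sqrt_lt' two_pos).2 (by norm_num)
  have hsqrt6 : √6 < 3 := (sqrt_lt' three_pos).2 (by norm_num)
  have hδ₄neg : δ₄ < 0 := hδ₄ ▸ mul_neg_of_neg_of_pos (by linarith) hp0
  have hp : |1 - a| < 1 := (sq_lt_one_iff_abs_lt_one _).1 (by linarith)
  refine ⟨hδ₄neg, fun x hx δ hδ => ?_⟩
  have hq0 : 0 < 1 - a + δ := by linarith [hδ.1]
  have hqp : 1 - a + δ ≤ √6 / 3 * (1 - a) := by linarith [hδ.2]
  have hqp_sq : (1 - a + δ) ^ 2 ≤ 2 / 3 * (1 - a) ^ 2 := by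
    refine (pow_le_pow_left₀ hq0.le hqp 2).trans_eq ?_
    rw [mul_pow, div_pow, sq_sqrt (by norm_num)]
    norm_num
  have hq : |1 - a + δ| < 1 := (sq_lt_one_iff_abs_lt_one _).1 (by linarith)
  have hpq := mul_one_sub_three_mul_le (sq_nonneg (1 - a)) ha' hqp_sq
  have hC₇ : -(3 / 2) * (δ ^ 2 + 2 * (1 - a) * δ + (1 - a) ^ 2 / 3) =
      (1 - a) ^ 2 - 3 / 2 * (1 - a + δ) ^ 2 := by ring
  rw [hC₇, sin_div_sub_sin_div, ← neg_sub 1 a, show -(1 - a) - δ = -(1 - a + δ) by ring]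
  exact ⟨by linarith, hyp_one_sub_sq_add_lt hp0.ne' hp hq hpq hx,
    hyp_one_sub_cube_lt hp0.ne' hp hq0.ne' hq hpq hx⟩

theorem stmt18 (a₀ a δ₄ : ℝ)
    (ha₀ : a₀ ∈ Ioo (0:ℝ) 1)
    (hroot : 4 * a₀ * (2 - a₀) * (1 - a₀) ^ 2 * (a₀ ^ 2 - 2 * a₀ + 2) ^ 2 = 1)
    (hmin : ∀ x ∈ Ioo (0:ℝ) 1,
      4 * x * (2 - x) * (1 - x) ^ 2 * (x ^ 2 - 2 * x + 2) ^ 2 = 1 → a₀ ≤ x)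
    (ha : a ∈ Ioo a₀ 1)
    (hδ₄ : δ₄ = (Real.sqrt 6 / 3 - 1) * (1 - a)) :
    δ₄ < 0 ∧
      ∀ x ∈ Ioo (0:ℝ) 1, ∀ δ ∈ Ioc (a - 1) δ₄,
        0 ≤ -(3/2) * (δ ^ 2 + 2 * (1 - a) * δ + (1 - a) ^ 2 / 3) ∧
        hyp (a - 1) (1 - a) 1 (1 - x ^ 2) +
            (-(3/2) * (δ ^ 2 + 2 * (1 - a) * δ + (1 - a) ^ 2 / 3)) * (1 - x ^ 2)
          < hyp (a - 1 - δ) (1 - a + δ) 1 (1 - x ^ 3) ∧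
        hyp (a - 1 - δ) (1 - a + δ) 1 (1 - x ^ 3)
          < hyp (a - 1) (1 - a) 1 (1 - x ^ 2) +
              ((1 / π) * (Real.sin (π * (a - δ)) / (1 - a + δ) - Real.sin (π * a) / (1 - a))) *
                (1 - x ^ 2) := by
  have hsq := pow_le_pow_left₀ (sub_nonneg.2 ha.2.le) (sub_le_sub_left ha.1.le 1) 2
  exact stmt18_general ha.2 (hsq.trans (sq_one_sub_le_of_root ha₀ hroot)) hδ₄
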